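/- Let k be a positive integer, β > 0, μ ∈ ℝ^k, u, v ∈ ℝ^k unit vectors, and p ≥ 1 a real number. Set c := 2p/(β√k) + 1. If x ~ N(μ, I_k) and Y := vᵀ (Z_{β,k} F_{β,k}(x)) u, then E[|Y|^p] = (Z_{β,k})^p · e^{−p‖μ‖²/(2p+β√k)} · (1 + 2p/(β√k))^{−k/2} · E_{y ~ N(μ/c, (1/c) I_k)}[ | (vᵀy)(uᵀy) − (β√k/(2+β√k)) vᵀu |^p ]. -/

import Mathlib

/-!
Since `|Y| = Z · e^{-‖x‖²/(β√k)} · |q(x)|` for a quadratic `q`, the `p`-th power of `|Y|` multiplies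
the Gaussian density by `e^{-p‖x‖²/(β√k)}`. Completing the square, the product is a constant times
another Gaussian density, with mean and variance divided by `c = 1 + 2p/(β√k)`; the factor
`c^{-k/2}` is the ratio of the two normalizations.
-/

open MeasureTheory

/-- The Gaussian measure `N(z, σ2 · I_k)` on `ℝ^k`, defined via its density
with respect to Lebesgue measure. -/
noncomputable def gaussian (k : ℕ) (z : EuclideanSpace ℝ (Fin k)) (σ2 : ℝ) :
    Measure (EuclideanSpace ℝ (Fin k)) :=
  volume.withDensity fun x =>
    ENNReal.ofReal ((2 * Real.pi * σ2) ^ (-(k : ℝ) / 2) * Real.exp (-‖x - z‖ ^ 2 / (2 * σ2)))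

/-- The normalization constant `Z_{β,k} = (1 + 2/(β√k))^{k/2+2}`. -/
noncomputable def Zconst (β : ℝ) (k : ℕ) : ℝ :=
  (1 + 2 / (β * Real.sqrt k)) ^ ((k : ℝ) / 2 + 2)

/-- The matrix `F_{β,k}(x) = (x xᵀ − (β√k/(β√k+2)) I_k) · e^{−‖x‖²/(β√k)}`. -/
noncomputable def Fmat (β : ℝ) (k : ℕ) (x : EuclideanSpace ℝ (Fin k)) :
    Matrix (Fin k) (Fin k) ℝ :=
  Real.exp (-‖x‖ ^ 2 / (β * Real.sqrt k)) •
    (Matrix.of (fun i j => x i * x j)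
      - (β * Real.sqrt k / (β * Real.sqrt k + 2)) • (1 : Matrix (Fin k) (Fin k) ℝ))

/-- The operator (spectral) norm of a real `k × k` matrix. -/
noncomputable def matOpNorm {k : ℕ} (A : Matrix (Fin k) (Fin k) ℝ) : ℝ :=
  ‖(Matrix.toEuclideanCLM (𝕜 := ℝ) A :
      EuclideanSpace ℝ (Fin k) →L[ℝ] EuclideanSpace ℝ (Fin k))‖

/-- The quadratic form `vᵀ A v`. -/
def quadForm {k : ℕ} (A : Matrix (Fin k) (Fin k) ℝ) (v : EuclideanSpace ℝ (Fin k)) : ℝ :=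
  ∑ i, ∑ j, v i * A i j * v j

/-- The bilinear form `vᵀ A u`. -/
def bilinForm {k : ℕ} (A : Matrix (Fin k) (Fin k) ℝ) (v u : EuclideanSpace ℝ (Fin k)) : ℝ :=
  ∑ i, ∑ j, v i * A i j * u j

lemma norm_sub_sq_div_add_mul_norm_sq {E : Type*} [NormedAddCommGroup E] [InnerProductSpace ℝ E]
    {a s : ℝ} (hs : s ≠ 0) (hc : 1 + 2 * a * s ≠ 0) (x z : E) :
    ‖x - z‖ ^ 2 / (2 * s) + a * ‖x‖ ^ 2 =
      a * ‖z‖ ^ 2 / (1 + 2 * a * s) +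
        ‖x - (1 + 2 * a * s)⁻¹ • z‖ ^ 2 / (2 * (s / (1 + 2 * a * s))) := by
  rw [norm_sub_sq_real, norm_sub_sq_real, inner_smul_right, norm_smul, mul_pow, Real.norm_eq_abs,
    sq_abs]
  set c := 1 + 2 * a * s with hc_def
  field_simp
  rw [hc_def]
  ring

section GaussianTilting

variable {k : ℕ} {a s : ℝ}

/-- The Lebesgue density of `N(z, s · I_k)`, where `s` is the variance of each coordinate. It names
the density in `gaussian k z s`, and is a probability density only for `0 < s`. -/
noncomputable def gaussianDensity (z : EuclideanSpace ℝ (Fin k)) (s : ℝ)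
    (x : EuclideanSpace ℝ (Fin k)) : ℝ :=
  (2 * Real.pi * s) ^ (-(k : ℝ) / 2) * Real.exp (-‖x - z‖ ^ 2 / (2 * s))

@[fun_prop]
lemma measurable_gaussianDensity (z : EuclideanSpace ℝ (Fin k)) (s : ℝ) :
    Measurable (gaussianDensity z s) := by
  unfold gaussianDensity
  fun_prop

lemma gaussian_eq_withDensity (z : EuclideanSpace ℝ (Fin k)) (s : ℝ) :
    gaussian k z s = volume.withDensity fun x ↦ ENNReal.ofReal (gaussianDensity z s x) :=
  rfl

lemma gaussianDensity_mul_exp_neg_mul_norm_sq (hs : 0 < s) (hc : 0 < 1 + 2 * a * s)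
    (z x : EuclideanSpace ℝ (Fin k)) :
    gaussianDensity z s x * Real.exp (-(a * ‖x‖ ^ 2)) =
      Real.exp (-(a * ‖z‖ ^ 2 / (1 + 2 * a * s))) * (1 + 2 * a * s) ^ (-(k : ℝ) / 2) *
        gaussianDensity ((1 + 2 * a * s)⁻¹ • z) (s / (1 + 2 * a * s)) x := by
  have square := norm_sub_sq_div_add_mul_norm_sq hs.ne' hc.ne' x z
  set c := 1 + 2 * a * s
  have normalization : (2 * Real.pi * s) ^ (-(k : ℝ) / 2) =
      c ^ (-(k : ℝ) / 2) * (2 * Real.pi * (s / c)) ^ (-(k : ℝ) / 2) := by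
    rw [← Real.mul_rpow hc.le (by positivity)]
    congr 1
    field_simp
  have exponent : Real.exp (-‖x - z‖ ^ 2 / (2 * s)) * Real.exp (-(a * ‖x‖ ^ 2)) =
      Real.exp (-(a * ‖z‖ ^ 2 / c)) * Real.exp (-‖x - c⁻¹ • z‖ ^ 2 / (2 * (s / c))) := by
    rw [← Real.exp_add, ← Real.exp_add, neg_div, neg_div, ← neg_add, ← neg_add, square]
  rw [gaussianDensity, gaussianDensity, mul_assoc, exponent, normalization]
  ring

lemma gaussian_withDensity_exp_neg_mul_norm_sq (hs : 0 < s) (hc : 0 < 1 + 2 * a * s)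
    (z : EuclideanSpace ℝ (Fin k)) :
    (gaussian k z s).withDensity (fun x ↦ ENNReal.ofReal (Real.exp (-(a * ‖x‖ ^ 2)))) =
      ENNReal.ofReal
          (Real.exp (-(a * ‖z‖ ^ 2 / (1 + 2 * a * s))) * (1 + 2 * a * s) ^ (-(k : ℝ) / 2)) •
        gaussian k ((1 + 2 * a * s)⁻¹ • z) (s / (1 + 2 * a * s)) := by
  rw [gaussian_eq_withDensity, gaussian_eq_withDensity,
    ← withDensity_mul _ (by fun_prop) (by fun_prop), ← withDensity_smul _ (by fun_prop)]
  congr 1 with x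
  simp only [Pi.mul_apply, Pi.smul_apply, smul_eq_mul]
  rw [← ENNReal.ofReal_mul' (Real.exp_nonneg _), ← ENNReal.ofReal_mul (by positivity),
    gaussianDensity_mul_exp_neg_mul_norm_sq hs hc]

lemma integral_exp_neg_mul_norm_sq_smul_gaussian {E : Type*} [NormedAddCommGroup E]
    [NormedSpace ℝ E] (hs : 0 < s) (hc : 0 < 1 + 2 * a * s) (z : EuclideanSpace ℝ (Fin k))
    (f : EuclideanSpace ℝ (Fin k) → E) :
    ∫ x, Real.exp (-(a * ‖x‖ ^ 2)) • f x ∂gaussian k z s =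
      (Real.exp (-(a * ‖z‖ ^ 2 / (1 + 2 * a * s))) * (1 + 2 * a * s) ^ (-(k : ℝ) / 2)) •
        ∫ y, f y ∂gaussian k ((1 + 2 * a * s)⁻¹ • z) (s / (1 + 2 * a * s)) := by
  calc ∫ x, Real.exp (-(a * ‖x‖ ^ 2)) • f x ∂gaussian k z s
      = ∫ x, f x ∂(gaussian k z s).withDensity
          (fun x ↦ ENNReal.ofReal (Real.exp (-(a * ‖x‖ ^ 2)))) := by
        rw [integral_withDensity_eq_integral_toReal_smul (by fun_prop) (by simp)]
        simp only [ENNReal.toReal_ofReal (Real.exp_nonneg _)]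
    _ = _ := by
        rw [gaussian_withDensity_exp_neg_mul_norm_sq hs hc, integral_smul_measure,
          ENNReal.toReal_ofReal (by positivity)]

end GaussianTilting

section BilinForm

variable {k : ℕ}

lemma bilinForm_eq_dotProduct_mulVec (A : Matrix (Fin k) (Fin k) ℝ)
    (v u : EuclideanSpace ℝ (Fin k)) : bilinForm A v u = v ⬝ᵥ A.mulVec u := by
  simp only [bilinForm, dotProduct, Matrix.mulVec, Finset.mul_sum, mul_assoc]

lemma bilinForm_smul (r : ℝ) (A : Matrix (Fin k) (Fin k) ℝ) (v u : EuclideanSpace ℝ (Fin k)) :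
    bilinForm (r • A) v u = r * bilinForm A v u := by
  simp only [bilinForm_eq_dotProduct_mulVec, Matrix.smul_mulVec, dotProduct_smul, smul_eq_mul]

lemma bilinForm_sub (A B : Matrix (Fin k) (Fin k) ℝ) (v u : EuclideanSpace ℝ (Fin k)) :
    bilinForm (A - B) v u = bilinForm A v u - bilinForm B v u := by
  simp only [bilinForm_eq_dotProduct_mulVec, Matrix.sub_mulVec, dotProduct_sub]

lemma bilinForm_one (v u : EuclideanSpace ℝ (Fin k)) :
    bilinForm 1 v u = ∑ i, v i * u i := by
  rw [bilinForm_eq_dotProduct_mulVec, Matrix.one_mulVec, dotProduct]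

lemma bilinForm_of_mul (x y v u : EuclideanSpace ℝ (Fin k)) :
    bilinForm (Matrix.of fun i j ↦ x i * y j) v u = (∑ i, v i * x i) * ∑ i, u i * y i := by
  simp only [bilinForm, Matrix.of_apply, Finset.sum_mul_sum]
  exact Finset.sum_congr rfl fun i _ ↦ Finset.sum_congr rfl fun j _ ↦ by ring

lemma bilinForm_Fmat (β : ℝ) (x v u : EuclideanSpace ℝ (Fin k)) :
    bilinForm (Fmat β k x) v u = Real.exp (-‖x‖ ^ 2 / (β * √k)) *
      ((∑ i, v i * x i) * (∑ i, u i * x i) - β * √k / (2 + β * √k) * ∑ i, v i * u i) := by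
  rw [Fmat, bilinForm_smul, bilinForm_sub, bilinForm_smul, bilinForm_one, bilinForm_of_mul,
    add_comm (β * √k)]

end BilinForm

lemma Zconst_nonneg {β : ℝ} (hβ : 0 ≤ β) (k : ℕ) : 0 ≤ Zconst β k := by
  unfold Zconst
  positivity

lemma abs_mul_exp_mul_rpow {r : ℝ} (hr : 0 ≤ r) (t q p : ℝ) :
    |r * (Real.exp t * q)| ^ p = r ^ p * (Real.exp (t * p) * |q| ^ p) := by
  rw [abs_mul, abs_mul, abs_of_nonneg hr, Real.abs_exp, Real.mul_rpow hr (by positivity),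
    Real.mul_rpow (Real.exp_nonneg t) (abs_nonneg q), ← Real.exp_mul]

theorem moment_identity_general {k : ℕ} (hk : 0 < k) {β : ℝ} (hβ : 0 < β)
    (μ u v : EuclideanSpace ℝ (Fin k)) {p : ℝ} (hp : 0 ≤ p) :
    ∫ x, |bilinForm (Zconst β k • Fmat β k x) v u| ^ p ∂(gaussian k μ 1)
      = (Zconst β k) ^ p * Real.exp (-p * ‖μ‖ ^ 2 / (2 * p + β * √k))
          * (1 + 2 * p / (β * √k)) ^ (-(k : ℝ) / 2)
          * ∫ y, |(∑ i, v i * y i) * (∑ i, u i * y i)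
                - (β * √k / (2 + β * √k)) * (∑ i, v i * u i)| ^ p
              ∂(gaussian k ((2 * p / (β * √k) + 1)⁻¹ • μ) ((2 * p / (β * √k) + 1)⁻¹)) := by
  have integrand (x : EuclideanSpace ℝ (Fin k)) :
      |bilinForm (Zconst β k • Fmat β k x) v u| ^ p =
        Zconst β k ^ p * (Real.exp (-(p / (β * √k) * ‖x‖ ^ 2)) •
          |(∑ i, v i * x i) * (∑ i, u i * x i)
            - (β * √k / (2 + β * √k)) * (∑ i, v i * u i)| ^ p) := by
    rw [bilinForm_smul, bilinForm_Fmat, abs_mul_exp_mul_rpow (Zconst_nonneg hβ.le k), smul_eq_mul]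
    ring_nf
  have scale : 1 + 2 * (p / (β * √k)) * 1 = 2 * p / (β * √k) + 1 := by ring
  have exponent : -(p / (β * √k) * ‖μ‖ ^ 2 / (2 * p / (β * √k) + 1)) =
      -p * ‖μ‖ ^ 2 / (2 * p + β * √k) := by
    field_simp
  simp only [integrand]
  rw [integral_const_mul, integral_exp_neg_mul_norm_sq_smul_gaussian one_pos (by positivity), scale,
    exponent, one_div, add_comm 1, smul_eq_mul]
  ring

/-- For `c = 2p/(β√k) + 1`, `x ~ N(μ, I_k)` and
`Y = vᵀ (Z_{β,k} F_{β,k}(x)) u`,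
`E[|Y|^p] = Z_{β,k}^p · e^{−p‖μ‖²/(2p+β√k)} · (1+2p/(β√k))^{−k/2}
  · E_{y ~ N(μ/c, (1/c) I_k)}[ |(vᵀy)(uᵀy) − (β√k/(2+β√k)) vᵀu|^p ]`. -/
theorem moment_identity (k : ℕ) (hk : 0 < k) (β : ℝ) (hβ : 0 < β)
    (μ u v : EuclideanSpace ℝ (Fin k)) (hu : ‖u‖ = 1) (hv : ‖v‖ = 1)
    (p : ℝ) (hp : 1 ≤ p) :
    ∫ x, |bilinForm (Zconst β k • Fmat β k x) v u| ^ p ∂(gaussian k μ 1)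
      = (Zconst β k) ^ p * Real.exp (-p * ‖μ‖ ^ 2 / (2 * p + β * Real.sqrt k))
          * (1 + 2 * p / (β * Real.sqrt k)) ^ (-(k : ℝ) / 2)
          * ∫ y, |(∑ i, v i * y i) * (∑ i, u i * y i)
                - (β * Real.sqrt k / (2 + β * Real.sqrt k)) * (∑ i, v i * u i)| ^ p
              ∂(gaussian k ((2 * p / (β * Real.sqrt k) + 1)⁻¹ • μ)
                  ((2 * p / (β * Real.sqrt k) + 1)⁻¹)) := by
  exact moment_identity_general hk hβ μ u v (zero_le_one.trans hp)
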